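/- arXiv:2207.00121 — 2 statements merged into one kernel-verified Lean document; each statement's English description precedes it below -/
import Mathlib

section
/- Let E be a real inner product space and ε > 0. The map α_ε(x) = x/√(‖x‖² + ε²) is monotone: for all x, y ∈ E, ⟪α_ε(x) − α_ε(y), x − y⟫ ≥ 0. -/
open scoped RealInnerProductSpace

/-! With `A = √(‖x‖² + ε²)` and `B = √(‖y‖² + ε²)`, substituting `‖x‖² = A² - ε²` and
`‖y‖² = B² - ε²` turns the inner product into `(A⁻¹ + B⁻¹) (A B - (⟪x, y⟫ + ε²))`. This is
nonnegative by Cauchy–Schwarz for the vectors `(x, ε)` and `(y, ε)` of `E × ℝ`. -/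

/-- Let `E` be a real inner product space and `ε > 0`. The map
`α_ε (x) = x / √(‖x‖² + ε²)` is monotone: for all `x, y ∈ E`,
`⟪α_ε (x) - α_ε (y), x - y⟫ ≥ 0`. -/
theorem alpha_eps_monotone {E : Type*} [NormedAddCommGroup E] [InnerProductSpace ℝ E]
    (ε : ℝ) (hε : 0 < ε) (x y : E) :
    0 ≤ ⟪(Real.sqrt (‖x‖ ^ 2 + ε ^ 2))⁻¹ • x - (Real.sqrt (‖y‖ ^ 2 + ε ^ 2))⁻¹ • y,
          x - y⟫ := by
  have hA : 0 < Real.sqrt (‖x‖ ^ 2 + ε ^ 2) := Real.sqrt_pos.mpr (by positivity)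
  have hB : 0 < Real.sqrt (‖y‖ ^ 2 + ε ^ 2) := Real.sqrt_pos.mpr (by positivity)
  have hA2 : Real.sqrt (‖x‖ ^ 2 + ε ^ 2) ^ 2 = ‖x‖ ^ 2 + ε ^ 2 := Real.sq_sqrt (by positivity)
  have hB2 : Real.sqrt (‖y‖ ^ 2 + ε ^ 2) ^ 2 = ‖y‖ ^ 2 + ε ^ 2 := Real.sq_sqrt (by positivity)
  set A := Real.sqrt (‖x‖ ^ 2 + ε ^ 2)
  set B := Real.sqrt (‖y‖ ^ 2 + ε ^ 2)
  have hAB : ⟪x, y⟫ + ε ^ 2 ≤ A * B := by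
    have hnorm : ‖x‖ * ‖y‖ + ε ^ 2 ≤ A * B := by
      refine (pow_le_pow_iff_left₀ (by positivity) (by positivity) two_ne_zero).mp ?_
      rw [mul_pow, hA2, hB2]
      nlinarith [sq_nonneg (ε * (‖x‖ - ‖y‖))]
    linarith [real_inner_le_norm x y]
  have hid : ⟪A⁻¹ • x - B⁻¹ • y, x - y⟫ = (A⁻¹ + B⁻¹) * (A * B - (⟪x, y⟫ + ε ^ 2)) := by
    simp only [inner_sub_left, inner_sub_right, real_inner_smul_left,
      real_inner_self_eq_norm_sq, real_inner_comm x y]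
    rw [eq_sub_of_add_eq hA2.symm, eq_sub_of_add_eq hB2.symm]
    field_simp
    ring
  rw [hid]
  exact mul_nonneg (by positivity) (sub_nonneg.mpr hAB)
end

section
/- Let E be a real inner product space and ε > 0. The map α_ε(x) = x/√(‖x‖² + ε²) is Lipschitz continuous on E with Lipschitz constant 1/ε: for all x, y ∈ E, ‖α_ε(x) − α_ε(y)‖ ≤ (1/ε)‖x − y‖. -/
/-! Put `a = √(‖x‖² + ε²)` and `b = √(‖y‖² + ε²)`, the norms of `(x, ε)` and `(y, ε)` in `E × ℝ`.
Expanding the inner products gives the identity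
`‖x/a - y/b‖² = (‖x - y‖² - (a - b)²) / (a b) - ε² (1/a - 1/b)²`,
which compares the distance of the normalized vectors `(x, ε)/a`, `(y, ε)/b` with that of
`(x, ε)`, `(y, ε)`. Dropping the two negative terms and using `a, b ≥ ε` yields the claim. -/

/-- Let `E` be a real inner product space and `ε > 0`. The map
`α_ε (x) = x / √(‖x‖² + ε²)` is Lipschitz continuous with constant `1/ε`: for all
`x, y ∈ E`, `‖α_ε (x) - α_ε (y)‖ ≤ (1/ε) * ‖x - y‖`. -/
theorem alpha_eps_lipschitz {E : Type*} [NormedAddCommGroup E] [InnerProductSpace ℝ E]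
    (ε : ℝ) (hε : 0 < ε) (x y : E) :
    ‖(Real.sqrt (‖x‖ ^ 2 + ε ^ 2))⁻¹ • x - (Real.sqrt (‖y‖ ^ 2 + ε ^ 2))⁻¹ • y‖
      ≤ (1 / ε) * ‖x - y‖ := by
  have ha2 : Real.sqrt (‖x‖ ^ 2 + ε ^ 2) ^ 2 = ‖x‖ ^ 2 + ε ^ 2 := Real.sq_sqrt (by positivity)
  have hb2 : Real.sqrt (‖y‖ ^ 2 + ε ^ 2) ^ 2 = ‖y‖ ^ 2 + ε ^ 2 := Real.sq_sqrt (by positivity)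
  have hae : ε ≤ Real.sqrt (‖x‖ ^ 2 + ε ^ 2) := Real.le_sqrt_of_sq_le (by nlinarith [sq_nonneg ‖x‖])
  have hbe : ε ≤ Real.sqrt (‖y‖ ^ 2 + ε ^ 2) := Real.le_sqrt_of_sq_le (by nlinarith [sq_nonneg ‖y‖])
  generalize Real.sqrt (‖x‖ ^ 2 + ε ^ 2) = a at *
  generalize Real.sqrt (‖y‖ ^ 2 + ε ^ 2) = b at *
  have ha : 0 < a := hε.trans_le hae
  have hb : 0 < b := hε.trans_le hbe
  have hx : ‖x‖ ^ 2 = a ^ 2 - ε ^ 2 := by linarith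
  have hy : ‖y‖ ^ 2 = b ^ 2 - ε ^ 2 := by linarith
  have key : ‖a⁻¹ • x - b⁻¹ • y‖ ^ 2
      = (‖x - y‖ ^ 2 - (a - b) ^ 2) / (a * b) - ε ^ 2 * (a⁻¹ - b⁻¹) ^ 2 := by
    rw [norm_sub_sq_real, norm_sub_sq_real, norm_smul, norm_smul, mul_pow, mul_pow, hx, hy,
      real_inner_smul_left, real_inner_smul_right, Real.norm_eq_abs, Real.norm_eq_abs,
      sq_abs, sq_abs]
    field_simp
    ring
  refine (sq_le_sq₀ (norm_nonneg _) (by positivity)).1 ?_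
  calc ‖a⁻¹ • x - b⁻¹ • y‖ ^ 2
      ≤ (‖x - y‖ ^ 2 - (a - b) ^ 2) / (a * b) := by
        rw [key]; linarith [mul_nonneg (sq_nonneg ε) (sq_nonneg (a⁻¹ - b⁻¹))]
    _ ≤ ‖x - y‖ ^ 2 / (ε * ε) := by
        gcongr
        linarith [sq_nonneg (a - b)]
    _ = (1 / ε * ‖x - y‖) ^ 2 := by
        field_simp
end
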